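/- Let (X,T) be a TDS with upper semi-continuous entropy map, h_top(T) < ∞, and Φ subadditive with β(Φ) > -∞. If μ is a weak-* accumulation point of equilibrium states (μ_t) as t → ∞, then h_μ(T) = lim_{t→∞} h_{μ_t}(T) = max{h_ν(T) : ν ∈ M_max(Φ)}. -/

import Mathlib

open MeasureTheory Filter Topology Set
open scoped ENNReal NNReal

/-- Positive part of an extended real, as an extended nonnegative real. -/
noncomputable def EReal.posPart (a : EReal) : ℝ≥0∞ :=
  if a = ⊤ then ⊤ else ENNReal.ofReal a.toReal

/-- `EReal`-valued logarithm of a real number: `elog r = -∞` for `r ≤ 0`. -/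
noncomputable def elog (r : ℝ) : EReal := ENNReal.log (ENNReal.ofReal r)

/-- The integral of an `EReal`-valued function, with values in `[-∞, ∞]`. -/
noncomputable def eint {X : Type*} [MeasurableSpace X] (μ : Measure X) (f : X → EReal) : EReal :=
  ((∫⁻ x, (f x).posPart ∂μ : ℝ≥0∞) : EReal) - ((∫⁻ x, (-f x).posPart ∂μ : ℝ≥0∞) : EReal)

/-- `Φ = {log φₙ}` is a subadditive potential for `T`: each `φₙ` is continuous,
nonnegative, and `φ_{n+m}(x) ≤ φₙ(x) · φₘ(Tⁿ x)`. -/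
def SubadditivePotential {X : Type*} [TopologicalSpace X] (T : X → X) (φ : ℕ → X → ℝ) : Prop :=
  (∀ n, 1 ≤ n → Continuous (φ n)) ∧ (∀ n x, 1 ≤ n → 0 ≤ φ n x) ∧
    (∀ m n : ℕ, 1 ≤ m → 1 ≤ n → ∀ x, φ (n + m) x ≤ φ n x * φ m (T^[n] x))

/-! By subadditivity the Lyapunov exponent `χ` is the infimum of the functionals
`μ ↦ m⁻¹ ∫ log max (φₘ, e⁻ᵏ) dμ`, hence upper semicontinuous on the compact set of invariant
measures. An accumulation point of the empirical measures of points maximizing `φₙ` has exponent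
`β`, so `β = max χ`. For equilibrium states `μ_t` of `h + t χ`, `t ↦ χ (μ_t)` increases to `β`
while `t ↦ h (μ_t)` decreases and stays above the entropy of every maximizing measure; upper
semicontinuity of `χ` and of `h` along `μ_t` gives the two properties of the accumulation point. -/

section ExtendedIntegral

variable {X : Type*} [MeasurableSpace X] {μ : Measure X}

lemma eint_eq_sub_toENNReal (μ : Measure X) (f : X → EReal) :
    eint μ f = ((∫⁻ x, (f x).toENNReal ∂μ : ℝ≥0∞) : EReal) -
      ((∫⁻ x, (-f x).toENNReal ∂μ : ℝ≥0∞) : EReal) :=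
  rfl

lemma eint_mono {f g : X → EReal} (hfg : f ≤ g) : eint μ f ≤ eint μ g := by
  simp only [eint_eq_sub_toENNReal]
  refine EReal.sub_le_sub ?_ ?_ <;>
    refine EReal.coe_ennreal_le_coe_ennreal_iff.2 <|
      lintegral_mono fun x => EReal.toENNReal_le_toENNReal ?_
  · exact hfg x
  · exact EReal.neg_le_neg_iff.2 (hfg x)

lemma eint_coe {g : X → ℝ} (hg : Integrable g μ) :
    eint μ (fun x => (g x : EReal)) = ((∫ x, g x ∂μ : ℝ) : EReal) := by
  have hneg : ∫⁻ x, ENNReal.ofReal (-g x) ∂μ ≠ ∞ := hg.neg.lintegral_lt_top.ne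
  rw [integral_eq_lintegral_pos_part_sub_lintegral_neg_part hg, EReal.coe_sub,
    EReal.coe_ennreal_toReal hg.lintegral_lt_top.ne, EReal.coe_ennreal_toReal hneg]
  rfl

lemma eint_const [IsProbabilityMeasure μ] (c : EReal) : eint μ (fun _ => c) = c := by
  rw [eint_eq_sub_toENNReal]
  induction c <;> simp [EReal.coe_ennreal_ofReal, ← EReal.coe_sub]

lemma toENNReal_max_neg_natCast (a : EReal) (k : ℕ) :
    (max a (-(k : EReal))).toENNReal = a.toENNReal := by
  rcases le_total a (-(k : EReal)) with h | h
  · have hk : -(k : EReal) ≤ 0 := by simp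
    rw [max_eq_right h, EReal.toENNReal_of_nonpos hk, EReal.toENNReal_of_nonpos (h.trans hk)]
  · rw [max_eq_left h]

lemma toENNReal_neg_max_neg_natCast (a : EReal) (k : ℕ) :
    (-max a (-(k : EReal))).toENNReal = min (-a).toENNReal k := by
  have hmono : Monotone EReal.toENNReal := fun _ _ => EReal.toENNReal_le_toENNReal
  have hk : (k : EReal).toENNReal = k := by
    rw [← EReal.coe_coe_eq_natCast, EReal.real_coe_toENNReal, ENNReal.ofReal_natCast]
  rw [← EReal.min_neg_neg, neg_neg, hmono.map_min, hk]

lemma tendsto_eint_max_neg_natCast {f : X → EReal} (hf : Measurable f)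
    (hfin : ∫⁻ x, (f x).toENNReal ∂μ ≠ ∞) :
    Tendsto (fun k : ℕ => eint μ (fun x => max (f x) (-(k : EReal)))) atTop (𝓝 (eint μ f)) := by
  have hneg : Tendsto (fun k : ℕ => ∫⁻ x, min (-f x).toENNReal k ∂μ) atTop
      (𝓝 (∫⁻ x, (-f x).toENNReal ∂μ)) := by
    refine lintegral_tendsto_of_tendsto_of_monotone
      (fun k => (hf.neg.ereal_toENNReal.min measurable_const).aemeasurable)
      (ae_of_all _ fun x i j hij => min_le_min_left _ (by exact_mod_cast hij))
      (ae_of_all _ fun x => ?_)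
    simpa using tendsto_const_nhds.min ENNReal.tendsto_nat_nhds_top
  simp only [eint_eq_sub_toENNReal, toENNReal_max_neg_natCast, toENNReal_neg_max_neg_natCast,
    sub_eq_add_neg]
  have hcont := EReal.continuousAt_add (p := (((∫⁻ x, (f x).toENNReal ∂μ : ℝ≥0∞) : EReal),
    -((∫⁻ x, (-f x).toENNReal ∂μ : ℝ≥0∞) : EReal))) (Or.inl (by simpa using hfin))
    (Or.inl (EReal.coe_ennreal_ne_bot _))
  exact hcont.tendsto.comp (tendsto_const_nhds.prodMk_nhds
    ((EReal.tendsto_coe_ennreal.2 hneg).neg))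

end ExtendedIntegral

section TruncatedLog

lemma elog_le_coe_iff {r s : ℝ} : elog r ≤ (s : EReal) ↔ r ≤ Real.exp s := by
  have hs : (s : EReal) = ENNReal.log (ENNReal.ofReal (Real.exp s)) := by
    rw [ENNReal.log_ofReal_of_pos (Real.exp_pos s), Real.log_exp]
  rw [hs, elog, ENNReal.log_le_log_iff, ENNReal.ofReal_le_ofReal_iff (Real.exp_pos s).le]

lemma elog_mono : Monotone elog :=
  fun _ _ hrs => ENNReal.log_monotone (ENNReal.ofReal_le_ofReal hrs)

lemma continuous_elog : Continuous elog :=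
  ENNReal.continuous_log.comp ENNReal.continuous_ofReal

/-- The logarithm truncated from below at `-k`: a continuous function on all of `ℝ` which
decreases to `elog` as `k → ∞`. -/
noncomputable def truncLog (k : ℕ) (r : ℝ) : ℝ := Real.log (max r (Real.exp (-k)))

lemma exp_truncLog (k : ℕ) (r : ℝ) : Real.exp (truncLog k r) = max r (Real.exp (-k)) :=
  Real.exp_log (lt_max_of_lt_right (Real.exp_pos _))

lemma le_exp_truncLog (k : ℕ) (r : ℝ) : r ≤ Real.exp (truncLog k r) :=
  (le_max_left _ _).trans_eq (exp_truncLog k r).symm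

lemma continuous_truncLog (k : ℕ) : Continuous (truncLog k) :=
  (continuous_id.max continuous_const).log fun _ => (lt_max_of_lt_right (Real.exp_pos _)).ne'

lemma coe_truncLog (k : ℕ) (r : ℝ) : (truncLog k r : EReal) = max (elog r) (-(k : EReal)) := by
  have hlog {s : ℝ} (hs : 0 < s) : elog s = Real.log s := ENNReal.log_ofReal_of_pos hs
  rw [truncLog, ← hlog (lt_max_of_lt_right (Real.exp_pos _)), elog_mono.map_max,
    hlog (Real.exp_pos _), Real.log_exp]
  rfl

variable {X : Type*} [TopologicalSpace X] [CompactSpace X] [MeasurableSpace X] [BorelSpace X]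

lemma integrable_of_continuous (μ : Measure X) [IsFiniteMeasure μ] {f : X → ℝ}
    (hf : Continuous f) : Integrable f μ :=
  hf.integrable_of_hasCompactSupport (.of_compactSpace f)

lemma tendsto_integral_truncLog (μ : Measure X) [IsFiniteMeasure μ] {f : X → ℝ}
    (hf : Continuous f) :
    Tendsto (fun k : ℕ => ((∫ x, truncLog k (f x) ∂μ : ℝ) : EReal)) atTop
      (𝓝 (eint μ fun x => elog (f x))) := by
  have hint (k : ℕ) : Integrable (fun x => truncLog k (f x)) μ :=
    integrable_of_continuous μ ((continuous_truncLog k).comp hf)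
  have hfin : ∫⁻ x, (elog (f x)).toENNReal ∂μ ≠ ∞ := by
    refine ne_of_eq_of_ne (lintegral_congr fun x => ?_) (hint 0).lintegral_lt_top.ne
    rw [← EReal.real_coe_toENNReal, coe_truncLog, toENNReal_max_neg_natCast]
  have hmeas : Measurable fun x => elog (f x) := (continuous_elog.comp hf).measurable
  refine (tendsto_eint_max_neg_natCast hmeas hfin).congr fun k => ?_
  rw [← eint_coe (hint k)]
  simp only [coe_truncLog]

end TruncatedLog

section BirkhoffSums

variable {X : Type*} {T : X → X} {f : X → ℝ}

lemma birkhoffAverage_comp_self (T : X → X) (f : X → ℝ) (n : ℕ) (x : X) :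
    birkhoffAverage ℝ T (f ∘ T) n x = birkhoffAverage ℝ T f n (T x) := by
  simp only [birkhoffAverage, birkhoffSum, Function.comp_apply, ← Function.iterate_succ_apply',
    Function.iterate_succ_apply]

lemma birkhoffSum_mul (T : X → X) (f : X → ℝ) (k m : ℕ) (x : X) :
    birkhoffSum T f (k * m) x = ∑ j ∈ Finset.range m, birkhoffSum T^[m] f k (T^[j] x) := by
  induction k with
  | zero => simp
  | succ k ih =>
    simp only [birkhoffSum_succ, Finset.sum_add_distrib, Nat.succ_mul, birkhoffSum_add, ih]
    congr 1
    refine Finset.sum_congr rfl fun j _ => ?_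
    rw [← Function.iterate_mul, ← Function.iterate_add_apply, ← Function.iterate_add_apply,
      add_comm, mul_comm]

variable [TopologicalSpace X]

lemma continuous_birkhoffSum (hT : Continuous T) (hf : Continuous f) (n : ℕ) :
    Continuous (birkhoffSum T f n) :=
  continuous_finsetSum _ fun i _ => hf.comp (hT.iterate i)

variable [CompactSpace X]

lemma exists_abs_le_of_continuous (hf : Continuous f) : ∃ D, ∀ x, |f x| ≤ D := by
  obtain ⟨D, hD⟩ := isCompact_univ.exists_bound_of_continuousOn hf.continuousOn
  exact ⟨D, fun x => hD x (mem_univ x)⟩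

lemma tendsto_birkhoffAverage_comp_sub_birkhoffAverage (T : X → X) (hf : Continuous f)
    (x : ℕ → X) :
    Tendsto (fun n => birkhoffAverage ℝ T (f ∘ T) n (x n) - birkhoffAverage ℝ T f n (x n)) atTop
      (𝓝 0) := by
  obtain ⟨D, hD⟩ := exists_abs_le_of_continuous hf
  refine squeeze_zero_norm (fun n => ?_) (tendsto_const_div_atTop_nhds_zero_nat (2 * D))
  rw [birkhoffAverage_comp_self, birkhoffAverage_apply_sub_birkhoffAverage, norm_smul, norm_inv,
    RCLike.norm_natCast, inv_mul_eq_div, two_mul]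
  gcongr
  exact (norm_sub_le _ _).trans (add_le_add (hD _) (hD _))

end BirkhoffSums

section InvariantMeasures

variable {X : Type*} [MeasurableSpace X] {T : X → X}

/-- The set `M(X, T)` of `T`-invariant Borel probability measures. -/
def invariantMeasures (T : X → X) : Set (ProbabilityMeasure X) :=
  {μ | Measure.map T (μ : Measure X) = (μ : Measure X)}

lemma integral_birkhoffSum {μ : Measure X} (hμ : MeasurePreserving T μ μ) {f : X → ℝ}
    (hf : Integrable f μ) (n : ℕ) :
    ∫ x, birkhoffSum T f n x ∂μ = n * ∫ x, f x ∂μ := by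
  have hiter (i : ℕ) : ∫ x, f (T^[i] x) ∂μ = ∫ x, f x ∂μ := by
    have hi := hμ.iterate i
    rw [← integral_map hi.measurable.aemeasurable (hi.map_eq.symm ▸ hf.aestronglyMeasurable),
      hi.map_eq]
  have hint (i : ℕ) : Integrable (fun x => f (T^[i] x)) μ :=
    (hμ.iterate i).integrable_comp_of_integrable hf
  simp [birkhoffSum, integral_finsetSum _ fun i _ => hint i, hiter]

/-- The empirical measure `n⁻¹ ∑_{l < n} δ_{T^l x}` of an orbit segment; it is a probability
measure for `n ≠ 0`. -/
noncomputable def empiricalMeasure (T : X → X) (n : ℕ) (x : X) : Measure X :=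
  (n : ℝ≥0∞)⁻¹ • ∑ l ∈ Finset.range n, Measure.dirac (T^[l] x)

instance isProbabilityMeasure_empiricalMeasure (T : X → X) (n : ℕ) [NeZero n] (x : X) :
    IsProbabilityMeasure (empiricalMeasure T n x) := by
  constructor
  simp [empiricalMeasure, ENNReal.inv_mul_cancel, NeZero.ne n]

variable [TopologicalSpace X] [BorelSpace X] [CompactSpace X]

lemma continuous_integral_of_continuous {f : X → ℝ} (hf : Continuous f) :
    Continuous fun μ : ProbabilityMeasure X => ∫ x, f x ∂(μ : Measure X) :=
  ProbabilityMeasure.continuous_integral_continuousMap (⟨f, hf⟩ : C(X, ℝ))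

lemma integral_empiricalMeasure (T : X → X) (n : ℕ) (x : X) {f : X → ℝ} (hf : Continuous f) :
    ∫ y, f y ∂(empiricalMeasure T n x) = birkhoffAverage ℝ T f n x := by
  rw [empiricalMeasure, integral_smul_measure,
    integral_finsetSum_measure fun i _ => integrable_of_continuous _ hf]
  simp [birkhoffAverage, birkhoffSum, integral_dirac' _ _ hf.stronglyMeasurable]

end InvariantMeasures

section KrylovBogolyubov

variable {X : Type*} [TopologicalSpace X] [MeasurableSpace X] [BorelSpace X]
  [HasOuterApproxClosed X] {T : X → X}

lemma isClosed_invariantMeasures (hT : Continuous T) : IsClosed (invariantMeasures T) := by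
  have hmap : invariantMeasures T =
      {μ : ProbabilityMeasure X | μ.map hT.measurable.aemeasurable = μ} :=
    Set.ext fun μ => (Subtype.ext_iff (a1 := μ.map hT.measurable.aemeasurable) (a2 := μ)).symm
  rw [hmap]
  exact isClosed_eq (ProbabilityMeasure.continuous_map hT) continuous_id

lemma mem_invariantMeasures_of_integral_comp (hT : Continuous T) {μ : ProbabilityMeasure X}
    (hμ : ∀ f : X → ℝ, Continuous f → ∫ x, f (T x) ∂(μ : Measure X) = ∫ x, f x ∂(μ : Measure X)) :
    μ ∈ invariantMeasures T := by
  have := Measure.isProbabilityMeasure_map (μ := (μ : Measure X)) hT.measurable.aemeasurable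
  refine ext_of_forall_integral_eq_of_IsFiniteMeasure fun f => ?_
  rw [integral_map hT.measurable.aemeasurable f.continuous.aestronglyMeasurable]
  exact hμ f f.continuous

variable [CompactSpace X] [T2Space X]

lemma exists_invariantMeasure_mapClusterPt_birkhoffAverage (hT : Continuous T) (x : ℕ → X) :
    ∃ ν ∈ invariantMeasures T, ∀ f : X → ℝ, Continuous f →
      MapClusterPt (∫ y, f y ∂(ν : Measure X)) atTop
        (fun n => birkhoffAverage ℝ T f n (x n)) := by
  let e (n : ℕ) : ProbabilityMeasure X := ⟨empiricalMeasure T (n + 1) (x (n + 1)), inferInstance⟩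
  obtain ⟨ν, hν⟩ := exists_clusterPt_of_compactSpace (map e atTop)
  obtain ⟨U, hU, hUν⟩ := mapClusterPt_iff_ultrafilter.1 hν
  have hint {f : X → ℝ} (hf : Continuous f) :
      Tendsto (fun n => birkhoffAverage ℝ T f (n + 1) (x (n + 1))) U
        (𝓝 (∫ y, f y ∂(ν : Measure X))) := by
    refine (((continuous_integral_of_continuous hf).tendsto ν).comp hUν).congr fun n => ?_
    exact integral_empiricalMeasure T (n + 1) _ hf
  have hsucc : Tendsto (· + 1 : ℕ → ℕ) U atTop := (tendsto_add_atTop_nat 1).mono_left hU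
  refine ⟨ν, mem_invariantMeasures_of_integral_comp hT fun f hf => ?_, fun f hf =>
    (hint hf).mapClusterPt.of_comp hsucc⟩
  have hdiff : Tendsto (fun n => birkhoffAverage ℝ T (f ∘ T) (n + 1) (x (n + 1)) -
      birkhoffAverage ℝ T f (n + 1) (x (n + 1))) U (𝓝 0) :=
    (tendsto_birkhoffAverage_comp_sub_birkhoffAverage T hf x).comp hsucc
  exact sub_eq_zero.1 (tendsto_nhds_unique ((hint (hf.comp hT)).sub (hint hf)) hdiff)

end KrylovBogolyubov

namespace SubadditivePotential

variable {X : Type*} [TopologicalSpace X] {T : X → X} {φ : ℕ → X → ℝ}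

lemma continuous (hφ : SubadditivePotential T φ) {n : ℕ} (hn : 1 ≤ n) : Continuous (φ n) :=
  hφ.1 n hn

lemma nonneg (hφ : SubadditivePotential T φ) {n : ℕ} (hn : 1 ≤ n) (x : X) : 0 ≤ φ n x :=
  hφ.2.1 n x hn

lemma add_le (hφ : SubadditivePotential T φ) {n m : ℕ} (hn : 1 ≤ n) (hm : 1 ≤ m) (x : X) :
    φ (n + m) x ≤ φ n x * φ m (T^[n] x) :=
  hφ.2.2 m n hm hn x

lemma mul_le_exp_birkhoffSum (hφ : SubadditivePotential T φ) {m : ℕ} (hm : 1 ≤ m) {g : X → ℝ}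
    (hg : ∀ x, φ m x ≤ Real.exp (g x)) {n : ℕ} (hn : 1 ≤ n) (x : X) :
    φ (n * m) x ≤ Real.exp (birkhoffSum T^[m] g n x) := by
  induction n, hn using Nat.le_induction with
  | base => simpa only [one_mul, birkhoffSum_one] using hg x
  | succ n hn ih =>
    rw [Nat.succ_mul, birkhoffSum_succ, Real.exp_add, ← Function.iterate_mul, mul_comm m n]
    exact (hφ.add_le (Nat.mul_pos hn hm) hm x).trans
      (mul_le_mul ih (hg _) (hφ.nonneg hm _) (Real.exp_pos _).le)

lemma exists_one_le_forall_le [CompactSpace X] (hφ : SubadditivePotential T φ) (N : ℕ) :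
    ∃ B : ℝ, 1 ≤ B ∧ ∀ i, 1 ≤ i → i ≤ N → ∀ x, φ i x ≤ B := by
  have hbound : ∀ i ∈ Finset.Icc 1 N, ∀ᶠ B : ℝ in atTop, ∀ x, φ i x ≤ B := fun i hi => by
    obtain ⟨D, hD⟩ := exists_abs_le_of_continuous (hφ.continuous (Finset.mem_Icc.1 hi).1)
    filter_upwards [eventually_ge_atTop D] with B hB x
    exact (le_abs_self _).trans ((hD x).trans hB)
  obtain ⟨B, hB, hB1⟩ :=
    (((Finset.eventually_all _).2 hbound).and (eventually_ge_atTop 1)).exists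
  exact ⟨B, hB1, fun i hi hiN => hB i (Finset.mem_Icc.2 ⟨hi, hiN⟩)⟩

section Bound

variable {N : ℕ} {B : ℝ}

lemma add_le_mul_apply_iterate (hφ : SubadditivePotential T φ) (hB1 : 1 ≤ B)
    (hB : ∀ i, 1 ≤ i → i ≤ N → ∀ x, φ i x ≤ B) {a b : ℕ} (ha : a ≤ N) (hb : 1 ≤ b) (x : X) :
    φ (a + b) x ≤ B * φ b (T^[a] x) := by
  have hb0 := hφ.nonneg hb
  rcases Nat.eq_zero_or_pos a with rfl | ha1
  · simpa using le_mul_of_one_le_left (hb0 x) hB1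
  · exact (hφ.add_le ha1 hb x).trans (mul_le_mul_of_nonneg_right (hB a ha1 ha x) (hb0 _))

lemma add_le_mul_apply (hφ : SubadditivePotential T φ) (hB1 : 1 ≤ B)
    (hB : ∀ i, 1 ≤ i → i ≤ N → ∀ x, φ i x ≤ B) {a b : ℕ} (ha : 1 ≤ a) (hb : b ≤ N) (x : X) :
    φ (a + b) x ≤ B * φ a x := by
  have ha0 := hφ.nonneg ha x
  rcases Nat.eq_zero_or_pos b with rfl | hb1
  · simpa using le_mul_of_one_le_left ha0 hB1
  · rw [mul_comm B]
    exact (hφ.add_le ha hb1 x).trans (mul_le_mul_of_nonneg_left (hB b hb1 hb _) ha0)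

/- Starting the blocks of length `m` at each offset `j < m` uses every point of the orbit exactly
once, which turns the Birkhoff sums of `T^[m]` into one of `T`. -/
lemma pow_le_mul_exp_birkhoffSum (hφ : SubadditivePotential T φ) {m : ℕ} (hm : 1 ≤ m)
    {g : X → ℝ} (hg : ∀ x, φ m x ≤ Real.exp (g x)) (hB1 : 1 ≤ B)
    (hB : ∀ i, 1 ≤ i → i ≤ N → ∀ x, φ i x ≤ B) {k r : ℕ} (hk : 1 ≤ k) (hmr : m ≤ r) (hr : r ≤ N)
    (x : X) :
    φ (k * m + r) x ^ m ≤ (B ^ 2) ^ m * Real.exp (birkhoffSum T g (k * m) x) := by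
  have hkm : 1 ≤ k * m := Nat.mul_pos hk hm
  have hoffset : ∀ j ∈ Finset.range m,
      φ (k * m + r) x ≤ B ^ 2 * Real.exp (birkhoffSum T^[m] g k (T^[j] x)) := fun j hj => by
    have hjm := Finset.mem_range.1 hj
    calc φ (k * m + r) x = φ (j + (k * m + (r - j))) x := by congr 1; omega
      _ ≤ B * φ (k * m + (r - j)) (T^[j] x) :=
        hφ.add_le_mul_apply_iterate hB1 hB (by omega) (by omega) x
      _ ≤ B * (B * φ (k * m) (T^[j] x)) := by
        gcongr
        exact hφ.add_le_mul_apply hB1 hB hkm (by omega) _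
      _ ≤ B ^ 2 * Real.exp (birkhoffSum T^[m] g k (T^[j] x)) := by
        rw [← mul_assoc, ← sq]
        gcongr
        exact hφ.mul_le_exp_birkhoffSum hm hg hk _
  calc φ (k * m + r) x ^ m = ∏ _j ∈ Finset.range m, φ (k * m + r) x := by simp
    _ ≤ ∏ j ∈ Finset.range m, B ^ 2 * Real.exp (birkhoffSum T^[m] g k (T^[j] x)) :=
      Finset.prod_le_prod (fun _ _ => hφ.nonneg (by omega) x) hoffset
    _ = (B ^ 2) ^ m * Real.exp (birkhoffSum T g (k * m) x) := by
      rw [Finset.prod_mul_distrib, ← Real.exp_sum, ← birkhoffSum_mul, Finset.prod_const,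
        Finset.card_range]

end Bound

lemma exists_le_exp_birkhoffSum_div [CompactSpace X] (hφ : SubadditivePotential T φ) {m : ℕ}
    (hm : 1 ≤ m) {g : X → ℝ} (hgc : Continuous g) (hg : ∀ x, φ m x ≤ Real.exp (g x)) :
    ∃ C : ℝ, ∀ n, 2 * m ≤ n → ∀ x, φ n x ≤ Real.exp ((C + birkhoffSum T g n x) / m) := by
  obtain ⟨B, hB1, hB⟩ := hφ.exists_one_le_forall_le (2 * m)
  obtain ⟨D, hD⟩ := exists_abs_le_of_continuous hgc
  refine ⟨m * Real.log (B ^ 2) + 2 * m * D, fun n hn x => ?_⟩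
  have hD0 : 0 ≤ D := (abs_nonneg _).trans (hD x)
  have hm0 : (m : ℝ) ≠ 0 := by positivity
  obtain ⟨k, r, hk, hmr, hr, rfl⟩ : ∃ k r, 1 ≤ k ∧ m ≤ r ∧ r ≤ 2 * m ∧ n = k * m + r := by
    have hdiv : 2 ≤ n / m := (Nat.le_div_iff_mul_le hm).2 hn
    have hmod := Nat.mod_lt n hm
    refine ⟨n / m - 1, m + n % m, by omega, by omega, by omega, ?_⟩
    rw [← add_assoc, ← Nat.succ_mul, Nat.succ_eq_add_one, Nat.sub_add_cancel (by omega),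
      Nat.div_add_mod']
  have htail : -(2 * m * D) ≤ birkhoffSum T g r (T^[k * m] x) :=
    calc -(2 * m * D) ≤ r * -D := by
          have : (r : ℝ) ≤ 2 * m := by exact_mod_cast hr
          nlinarith
      _ = ∑ _i ∈ Finset.range r, -D := by simp
      _ ≤ birkhoffSum T g r (T^[k * m] x) :=
        Finset.sum_le_sum fun i _ => (abs_le.1 (hD _)).1
  have hB2 : (B ^ 2) ^ m = Real.exp (m * Real.log (B ^ 2)) := by
    rw [Real.exp_nat_mul, Real.exp_log (by positivity)]
  rw [← pow_le_pow_iff_left₀ (hφ.nonneg (by omega) x) (Real.exp_pos _).le (by omega : m ≠ 0),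
    ← Real.exp_nat_mul, mul_div_cancel₀ _ hm0]
  refine (hφ.pow_le_mul_exp_birkhoffSum hm hg hB1 hB hk hmr hr x).trans ?_
  rw [hB2, ← Real.exp_add, Real.exp_le_exp, birkhoffSum_add]
  linarith

end SubadditivePotential

section LyapunovExponent

variable {X : Type*} [MeasurableSpace X] {φ : ℕ → X → ℝ} {μ : Measure X} {c : EReal}

/-- `c` is the Lyapunov exponent `χ(μ, Φ) = lim n⁻¹ ∫ log φₙ dμ` of the potential
`Φ = {log φₙ}` with respect to `μ`. -/
def HasLyapunovExponent (φ : ℕ → X → ℝ) (μ : Measure X) (c : EReal) : Prop :=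
  Tendsto (fun n : ℕ => eint μ (fun x => elog (φ n x)) / (n : EReal)) atTop (𝓝 c)

variable [TopologicalSpace X] [CompactSpace X] {T : X → X}

lemma HasLyapunovExponent.le_of_tendsto_iSup [IsProbabilityMeasure μ] {β : EReal}
    (hc : HasLyapunovExponent φ μ c) (hφ : SubadditivePotential T φ)
    (hβ : Tendsto (fun n : ℕ => elog (⨆ x, φ n x) / (n : EReal)) atTop (𝓝 β)) : c ≤ β := by
  refine le_of_tendsto_of_tendsto hc hβ ?_
  filter_upwards [eventually_ge_atTop 1] with n hn
  obtain ⟨D, hD⟩ := exists_abs_le_of_continuous (hφ.continuous hn)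
  have hbdd : BddAbove (range (φ n)) :=
    ⟨D, forall_mem_range.2 fun x => (le_abs_self _).trans (hD x)⟩
  exact EReal.div_le_div_right_of_nonneg (by positivity)
    ((eint_mono fun x => elog_mono (le_ciSup hbdd x)).trans_eq (eint_const _))

variable [BorelSpace X]

lemma HasLyapunovExponent.le_integral_div [IsFiniteMeasure μ] (hc : HasLyapunovExponent φ μ c)
    (hφ : SubadditivePotential T φ) (hT : Continuous T) (hμ : MeasurePreserving T μ μ) {m : ℕ}
    (hm : 1 ≤ m) {g : X → ℝ} (hgc : Continuous g) (hg : ∀ x, φ m x ≤ Real.exp (g x)) :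
    c ≤ (((∫ x, g x ∂μ) / m : ℝ) : EReal) := by
  have hsub : Tendsto (fun n => n * m) atTop atTop := tendsto_id.atTop_mul_const' (by omega)
  refine le_of_tendsto (hc.comp hsub) ?_
  filter_upwards [eventually_ge_atTop 1] with n hn
  have hint : Integrable (birkhoffSum T^[m] g n) μ :=
    integrable_of_continuous μ (continuous_birkhoffSum (hT.iterate m) hgc n)
  have hle : eint μ (fun x => elog (φ (n * m) x)) ≤ ((n * ∫ x, g x ∂μ : ℝ) : EReal) :=
    calc eint μ (fun x => elog (φ (n * m) x))
        ≤ eint μ (fun x => ((birkhoffSum T^[m] g n x : ℝ) : EReal)) :=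
          eint_mono fun x => elog_le_coe_iff.2 (hφ.mul_le_exp_birkhoffSum hm hg hn x)
      _ = ((n * ∫ x, g x ∂μ : ℝ) : EReal) := by
          rw [eint_coe hint, integral_birkhoffSum (hμ.iterate m) (integrable_of_continuous μ hgc)]
  refine (EReal.div_le_div_right_of_nonneg (by positivity) hle).trans_eq ?_
  rw [← EReal.coe_coe_eq_natCast, ← EReal.coe_div, Nat.cast_mul,
    mul_div_mul_left _ _ (by positivity)]

lemma HasLyapunovExponent.le_iff_forall_le_integral_truncLog [IsFiniteMeasure μ]
    (hc : HasLyapunovExponent φ μ c) (hφ : SubadditivePotential T φ) (hT : Continuous T)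
    (hμ : MeasurePreserving T μ μ) {b : EReal} :
    b ≤ c ↔ ∀ m k : ℕ, b ≤ (((∫ x, truncLog k (φ (m + 1) x) ∂μ) / (m + 1 : ℕ) : ℝ) : EReal) := by
  refine ⟨fun hb m k => hb.trans (hc.le_integral_div hφ hT hμ m.succ_pos
    ((continuous_truncLog k).comp (hφ.continuous m.succ_pos)) fun x => le_exp_truncLog k _),
    fun hb => ge_of_tendsto' (hc.comp (tendsto_add_atTop_nat 1)) fun m => ?_⟩
  have hm0 : (0 : EReal) < (m + 1 : ℕ) := by exact_mod_cast m.succ_pos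
  rw [Function.comp_apply, EReal.le_div_iff_mul_le hm0 (EReal.natCast_ne_top _)]
  refine ge_of_tendsto' (tendsto_integral_truncLog μ (hφ.continuous m.succ_pos)) fun k => ?_
  rw [← EReal.le_div_iff_mul_le hm0 (EReal.natCast_ne_top _), ← EReal.coe_coe_eq_natCast,
    ← EReal.coe_div]
  exact hb m k

variable {χ : ProbabilityMeasure X → EReal} {β : EReal}

lemma upperSemicontinuousOn_lyapunovExponent (hφ : SubadditivePotential T φ) (hT : Continuous T)
    (hχ : ∀ μ ∈ invariantMeasures T, HasLyapunovExponent φ (μ : Measure X) (χ μ)) :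
    UpperSemicontinuousOn χ (invariantMeasures T) := by
  have hiInf : ∀ μ ∈ invariantMeasures T, ⨅ (m : ℕ) (k : ℕ),
      (((∫ x, truncLog k (φ (m + 1) x) ∂(μ : Measure X)) / (m + 1 : ℕ) : ℝ) : EReal) = χ μ :=
    fun μ hμ => eq_of_forall_le_iff fun b => by
      rw [(hχ μ hμ).le_iff_forall_le_integral_truncLog hφ hT ⟨hT.measurable, hμ⟩]
      simp only [le_iInf_iff]
  have husc : UpperSemicontinuousOn (fun μ : ProbabilityMeasure X => ⨅ (m : ℕ) (k : ℕ),
      (((∫ x, truncLog k (φ (m + 1) x) ∂(μ : Measure X)) / (m + 1 : ℕ) : ℝ) : EReal))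
      (invariantMeasures T) :=
    upperSemicontinuousOn_iInf fun m => upperSemicontinuousOn_iInf fun k =>
      (continuous_coe_real_ereal.comp ((continuous_integral_of_continuous
        ((continuous_truncLog k).comp (hφ.continuous m.succ_pos))).div_const _)
        ).upperSemicontinuous.upperSemicontinuousOn _
  intro μ hμ b hb
  filter_upwards [self_mem_nhdsWithin, husc μ hμ b ((hiInf μ hμ).trans_lt hb)] with ν hν hνb
  exact (hiInf ν hν).symm.trans_lt hνb

variable [T2Space X] [HasOuterApproxClosed X] [Nonempty X]

lemma exists_invariantMeasure_forall_le_integral_div (hφ : SubadditivePotential T φ)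
    (hT : Continuous T)
    (hβ : Tendsto (fun n : ℕ => elog (⨆ x, φ n x) / (n : EReal)) atTop (𝓝 β)) :
    ∃ ν ∈ invariantMeasures T, ∀ m, 1 ≤ m → ∀ g : X → ℝ, Continuous g →
      (∀ x, φ m x ≤ Real.exp (g x)) → β ≤ (((∫ x, g x ∂(ν : Measure X)) / m : ℝ) : EReal) := by
  have hmax (n : ℕ) : ∃ x, 1 ≤ n → φ n x = ⨆ y, φ n y := by
    by_cases hn : 1 ≤ n
    · obtain ⟨x, -, hx⟩ :=
        isCompact_univ.exists_sSup_image_eq univ_nonempty (hφ.continuous hn).continuousOn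
      exact ⟨x, fun _ => by rw [← hx, image_univ, sSup_range]⟩
    · exact ⟨Classical.arbitrary X, fun h => absurd h hn⟩
  choose x hx using hmax
  obtain ⟨ν, hν, hclus⟩ := exists_invariantMeasure_mapClusterPt_birkhoffAverage hT x
  refine ⟨ν, hν, fun m hm g hgc hg => ?_⟩
  obtain ⟨C, hC⟩ := hφ.exists_le_exp_birkhoffSum_div hm hgc hg
  obtain ⟨U, hU, hUν⟩ := mapClusterPt_iff_ultrafilter.1 (hclus g hgc)
  have hlim : Tendsto (fun n : ℕ => (((C / n + birkhoffAverage ℝ T g n (x n)) / m : ℝ) : EReal)) U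
      (𝓝 (((0 + ∫ y, g y ∂(ν : Measure X)) / m : ℝ) : EReal)) :=
    EReal.tendsto_coe.2
      ((((tendsto_const_div_atTop_nhds_zero_nat C).mono_left hU).add hUν).div_const _)
  rw [zero_add] at hlim
  refine le_of_tendsto_of_tendsto (hβ.mono_left hU) hlim (hU ?_)
  filter_upwards [eventually_ge_atTop (2 * m)] with n hn
  have hle : elog (⨆ y, φ n y) ≤ (((C + birkhoffSum T g n (x n)) / m : ℝ) : EReal) := by
    rw [← hx n (by omega)]
    exact elog_le_coe_iff.2 (hC n hn (x n))
  refine (EReal.div_le_div_right_of_nonneg (by positivity) hle).trans_eq ?_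
  rw [← EReal.coe_coe_eq_natCast, ← EReal.coe_div, birkhoffAverage, smul_eq_mul]
  congr 1
  ring

lemma isGreatest_lyapunovExponent (hφ : SubadditivePotential T φ) (hT : Continuous T)
    (hχ : ∀ μ ∈ invariantMeasures T, HasLyapunovExponent φ (μ : Measure X) (χ μ))
    (hβ : Tendsto (fun n : ℕ => elog (⨆ x, φ n x) / (n : EReal)) atTop (𝓝 β)) :
    IsGreatest (χ '' invariantMeasures T) β := by
  have hle : ∀ μ ∈ invariantMeasures T, χ μ ≤ β := fun μ hμ =>
    (hχ μ hμ).le_of_tendsto_iSup hφ hβ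
  obtain ⟨ν, hν, hβν⟩ := exists_invariantMeasure_forall_le_integral_div hφ hT hβ
  refine ⟨⟨ν, hν, (hle ν hν).antisymm ?_⟩, forall_mem_image.2 hle⟩
  rw [(hχ ν hν).le_iff_forall_le_integral_truncLog hφ hT ⟨hT.measurable, hν⟩]
  exact fun m k => hβν (m + 1) m.succ_pos _
    ((continuous_truncLog k).comp (hφ.continuous m.succ_pos)) fun x => le_exp_truncLog k _

end LyapunovExponent

section ZeroTemperatureLimit

variable {M : Type*} {K : Set M} {h c : M → ℝ}

lemma le_of_isMaxOn_add_mul {t : ℝ} {x y : M} (hx : IsMaxOn (fun z => h z + t * c z) K x)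
    (ht : 0 ≤ t) (hy : y ∈ K) (hc : c x ≤ c y) : h y ≤ h x := by
  have hmax : h y + t * c y ≤ h x + t * c x := hx hy
  linarith [mul_le_mul_of_nonneg_left hc ht]

lemma le_of_isMaxOn_add_mul_of_lt {s t : ℝ} (hst : s < t) {x y : M} (hxK : x ∈ K) (hyK : y ∈ K)
    (hx : IsMaxOn (fun z => h z + s * c z) K x) (hy : IsMaxOn (fun z => h z + t * c z) K y) :
    c x ≤ c y := by
  have hxy : h y + s * c y ≤ h x + s * c x := hx hyK
  have hyx : h x + t * c x ≤ h y + t * c y := hy hxK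
  refine le_of_mul_le_mul_left ?_ (sub_pos.2 hst)
  linarith

lemma antitoneOn_of_isMaxOn_add_mul {x : ℝ → M} (hxK : ∀ t, 0 < t → x t ∈ K)
    (hx : ∀ t, 0 < t → IsMaxOn (fun z => h z + t * c z) K (x t)) :
    AntitoneOn (fun t => h (x t)) (Ioi 0) := by
  intro s hs t ht hst
  rcases hst.eq_or_lt with rfl | hst
  · exact le_rfl
  · have hc : c (x s) ≤ c (x t) :=
      le_of_isMaxOn_add_mul_of_lt hst (hxK s hs) (hxK t ht) (hx s hs) (hx t ht)
    exact le_of_isMaxOn_add_mul (hx s hs) (le_of_lt hs) (hxK t ht) hc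

lemma tendsto_of_isMaxOn_add_mul {β : ℝ} (hh : BddAbove (h '' K)) (hβ : IsGreatest (c '' K) β)
    {x : ℝ → M} (hxK : ∀ t, 0 < t → x t ∈ K)
    (hx : ∀ t, 0 < t → IsMaxOn (fun z => h z + t * c z) K (x t)) :
    Tendsto (c ∘ x) atTop (𝓝 β) := by
  obtain ⟨H, hH⟩ := hh
  obtain ⟨⟨y, hyK, rfl⟩, hle⟩ := hβ
  have hlow : Tendsto (fun t : ℝ => c y - (H - h y) / t) atTop (𝓝 (c y)) := by
    simpa using (tendsto_id.const_div_atTop (H - h y)).const_sub (c y)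
  refine tendsto_of_tendsto_of_tendsto_of_le_of_le' hlow tendsto_const_nhds ?_ ?_
  all_goals filter_upwards [eventually_gt_atTop 0] with t ht
  · have hmax : h y + t * c y ≤ h (x t) + t * c (x t) := hx t ht hyK
    have hHt : h (x t) ≤ H := hH (mem_image_of_mem h (hxK t ht))
    rw [sub_le_comm, le_div_iff₀ ht, Function.comp_apply]
    linarith
  · exact hle (mem_image_of_mem c (hxK t ht))

lemma tendsto_of_antitoneOn_of_frequently_lt {u : ℝ → ℝ} {s l : ℝ} (hu : AntitoneOn u (Ioi s))
    (hl : ∀ t, s < t → l ≤ u t) (hfreq : ∀ b, l < b → ∃ᶠ t in atTop, u t < b) :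
    Tendsto u atTop (𝓝 l) := by
  refine tendsto_order.2 ⟨fun b hb => ?_, fun b hb => ?_⟩
  · filter_upwards [eventually_gt_atTop s] with t ht using hb.trans_le (hl t ht)
  · obtain ⟨t₀, hub, ht₀⟩ := ((hfreq b hb).and_eventually (eventually_gt_atTop s)).exists
    filter_upwards [eventually_ge_atTop t₀] with t ht
    exact (hu ht₀ (lt_of_lt_of_le ht₀ ht) ht).trans_lt hub

/-- The maximizers over `K` of `h + t χ`: the equilibrium states of `t Φ` when `h` is the entropy
and `χ` the Lyapunov exponent on the set `K` of invariant measures. -/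
def equilibria (K : Set M) (h : M → ℝ) (χ : M → EReal) (t : ℝ) : Set M :=
  {x ∈ K | IsMaxOn (fun z => (h z : EReal) + (t : EReal) * χ z) K x}

variable {χ : M → EReal} {β : ℝ}

lemma coe_toReal_of_isGreatest (hβ : IsGreatest (χ '' K) (β : EReal)) {x : M}
    (hx : x ∈ {z ∈ K | χ z ≠ ⊥}) : (((χ x).toReal : ℝ) : EReal) = χ x :=
  EReal.coe_toReal ((hβ.2 (mem_image_of_mem χ hx.1)).trans_lt (EReal.coe_lt_top β)).ne hx.2

lemma isGreatest_toReal_image (hβ : IsGreatest (χ '' K) (β : EReal)) :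
    IsGreatest ((fun z => (χ z).toReal) '' {z ∈ K | χ z ≠ ⊥}) β := by
  obtain ⟨y, hyK, hy⟩ := hβ.1
  refine ⟨⟨y, ⟨hyK, by simp [hy]⟩, by simp [hy]⟩, forall_mem_image.2 fun z hz => ?_⟩
  rw [← EReal.coe_le_coe_iff, coe_toReal_of_isGreatest hβ hz]
  exact hβ.2 (mem_image_of_mem χ hz.1)

lemma mem_sep_ne_bot_of_mem_equilibria (hβ : IsGreatest (χ '' K) (β : EReal)) {t : ℝ} (ht : 0 < t)
    {x : M} (hx : x ∈ equilibria K h χ t) : x ∈ {z ∈ K | χ z ≠ ⊥} := by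
  refine ⟨hx.1, fun hbot => ?_⟩
  obtain ⟨y, hyK, hy⟩ := hβ.1
  have hmax : (h y : EReal) + t * χ y ≤ h x + t * χ x := hx.2 hyK
  rw [hy, hbot, EReal.coe_mul_bot_of_pos ht, EReal.add_bot, ← EReal.coe_mul,
    ← EReal.coe_add] at hmax
  exact (EReal.bot_lt_coe _).not_ge hmax

lemma isMaxOn_toReal_of_mem_equilibria (hβ : IsGreatest (χ '' K) (β : EReal)) {t : ℝ}
    (ht : 0 < t) {x : M} (hx : x ∈ equilibria K h χ t) :
    IsMaxOn (fun z => h z + t * (χ z).toReal) {z ∈ K | χ z ≠ ⊥} x := by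
  intro y hy
  have hmax : (h y : EReal) + t * χ y ≤ h x + t * χ x := hx.2 hy.1
  rw [← coe_toReal_of_isGreatest hβ hy,
    ← coe_toReal_of_isGreatest hβ (mem_sep_ne_bot_of_mem_equilibria hβ ht hx)] at hmax
  exact_mod_cast hmax

variable [TopologicalSpace M]

lemma frequently_lt_of_mapClusterPt {α ι : Type*} [Preorder α] {f : M → α}
    (hf : UpperSemicontinuousOn f K) {a : M} (ha : a ∈ K) {l : Filter ι} {x : ι → M}
    (hx : ∀ᶠ i in l, x i ∈ K) (hacc : MapClusterPt a l x) {b : α} (hb : f a < b) :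
    ∃ᶠ i in l, f (x i) < b :=
  ((hacc.frequently (eventually_nhdsWithin_iff.1 (hf a ha b hb))).and_eventually hx).mono
    fun _ hi => hi.1 hi.2

lemma eq_of_mapClusterPt_equilibria (hK : IsCompact K) (hh : UpperSemicontinuousOn h K)
    (hχ : UpperSemicontinuousOn χ K) (hβ : IsGreatest (χ '' K) (β : EReal)) {x : ℝ → M}
    (hx : ∀ t, 0 < t → x t ∈ equilibria K h χ t) {a : M} (ha : a ∈ K)
    (hacc : MapClusterPt a atTop x) : χ a = β := by
  have hxK : ∀ t, 0 < t → x t ∈ {z ∈ K | χ z ≠ ⊥} := fun t ht =>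
    mem_sep_ne_bot_of_mem_equilibria hβ ht (hx t ht)
  have hlim : Tendsto (fun t => (χ (x t)).toReal) atTop (𝓝 β) :=
    tendsto_of_isMaxOn_add_mul ((hh.bddAbove_of_isCompact hK).mono (image_mono (sep_subset _ _)))
      (isGreatest_toReal_image hβ) hxK fun t ht => isMaxOn_toReal_of_mem_equilibria hβ ht (hx t ht)
  have hlim' : Tendsto (χ ∘ x) atTop (𝓝 (β : EReal)) := by
    refine (EReal.tendsto_coe.2 hlim).congr' ?_
    filter_upwards [eventually_gt_atTop 0] with t ht using coe_toReal_of_isGreatest hβ (hxK t ht)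
  refine (hβ.2 (mem_image_of_mem χ ha)).antisymm (le_of_not_gt fun hlt => ?_)
  obtain ⟨b, hab, hbβ⟩ := exists_between hlt
  have hxK' : ∀ᶠ t in atTop, x t ∈ K := by
    filter_upwards [eventually_gt_atTop 0] with t ht using (hx t ht).1
  exact frequently_lt_of_mapClusterPt hχ ha hxK' hacc hab
    ((hlim'.eventually_const_lt hbβ).mono fun _ => not_lt_of_gt)

theorem tendsto_and_isGreatest_of_mapClusterPt_equilibria (hK : IsCompact K) (hK' : IsClosed K)
    (hh : UpperSemicontinuousOn h K) (hχ : UpperSemicontinuousOn χ K)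
    (hβ : IsGreatest (χ '' K) (β : EReal)) {x : ℝ → M}
    (hx : ∀ t, 0 < t → x t ∈ equilibria K h χ t) {a : M} (hacc : MapClusterPt a atTop x) :
    Tendsto (fun t => h (x t)) atTop (𝓝 (h a)) ∧
      IsGreatest {r : ℝ | ∃ y ∈ K, χ y = β ∧ r = h y} (h a) := by
  have hxK : ∀ᶠ t in atTop, x t ∈ K := by
    filter_upwards [eventually_gt_atTop 0] with t ht using (hx t ht).1
  have haK : a ∈ K := hK'.mem_of_mapClusterPt hacc hxK
  have hχa : χ a = β := eq_of_mapClusterPt_equilibria hK hh hχ hβ hx haK hacc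
  have hmax (t : ℝ) (ht : 0 < t) := isMaxOn_toReal_of_mem_equilibria hβ ht (hx t ht)
  have hxK' (t : ℝ) (ht : 0 < t) : x t ∈ {z ∈ K | χ z ≠ ⊥} :=
    mem_sep_ne_bot_of_mem_equilibria hβ ht (hx t ht)
  have hle : ∀ y ∈ K, χ y = β → ∀ t, 0 < t → h y ≤ h (x t) := fun y hy hyβ t ht =>
    le_of_isMaxOn_add_mul (hmax t ht) ht.le ⟨hy, by simp [hyβ]⟩ <|
      ((isGreatest_toReal_image hβ).2 (mem_image_of_mem _ (hxK' t ht))).trans_eq (by simp [hyβ])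
  have hlim : Tendsto (fun t => h (x t)) atTop (𝓝 (h a)) :=
    tendsto_of_antitoneOn_of_frequently_lt (antitoneOn_of_isMaxOn_add_mul hxK' hmax)
      (hle a haK hχa) fun b hb => frequently_lt_of_mapClusterPt hh haK hxK hacc hb
  refine ⟨hlim, ⟨a, haK, hχa, rfl⟩, ?_⟩
  rintro _ ⟨y, hy, hyβ, rfl⟩
  refine ge_of_tendsto hlim ?_
  filter_upwards [eventually_gt_atTop 0] with t ht using hle y hy hyβ t ht

end ZeroTemperatureLimit

theorem entropy_of_accumulation_point_eq_max_entropy_of_maximizing_general {X : Type*}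
    [TopologicalSpace X] [CompactSpace X] [T2Space X] [HasOuterApproxClosed X] [MeasurableSpace X]
    [BorelSpace X] {T : X → X} (hT : Continuous T) {φ : ℕ → X → ℝ}
    (hφ : SubadditivePotential T φ) {h : ProbabilityMeasure X → ℝ}
    (husc : UpperSemicontinuousOn h (invariantMeasures T)) {χ : ProbabilityMeasure X → EReal}
    (hχ : ∀ μ ∈ invariantMeasures T, HasLyapunovExponent φ (μ : Measure X) (χ μ)) {β : ℝ}
    (hβ : Tendsto (fun n : ℕ => elog (⨆ x, φ n x) / (n : EReal)) atTop (𝓝 (β : EReal)))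
    {μt : ℝ → ProbabilityMeasure X}
    (hμt : ∀ t, 0 < t → μt t ∈ equilibria (invariantMeasures T) h χ t)
    {μ_inf : ProbabilityMeasure X} (hacc : MapClusterPt μ_inf atTop μt) :
    Tendsto (fun t => h (μt t)) atTop (𝓝 (h μ_inf)) ∧
      IsGreatest {r : ℝ | ∃ ν ∈ invariantMeasures T, χ ν = β ∧ r = h ν} (h μ_inf) := by
  have : Nonempty X := nonempty_of_isProbabilityMeasure (μ_inf : Measure X)
  have hclosed : IsClosed (invariantMeasures T) := isClosed_invariantMeasures hT
  exact tendsto_and_isGreatest_of_mapClusterPt_equilibria hclosed.isCompact hclosed husc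
    (upperSemicontinuousOn_lyapunovExponent hφ hT hχ) (isGreatest_lyapunovExponent hφ hT hχ hβ)
    hμt hacc

/-- for a weak-* accumulation point μ of equilibrium states (μ_t),
h_μ(T) = lim_{t→∞} h_{μ_t}(T) = max{h_ν(T) : ν ∈ M_max(Φ)}. -/
theorem entropy_of_accumulation_point_eq_max_entropy_of_maximizing
    {X : Type*} [MetricSpace X] [CompactSpace X] [Nonempty X]
    [MeasurableSpace X] [BorelSpace X]
    (T : X → X) (hT : Continuous T)
    (φ : ℕ → X → ℝ) (hφ : SubadditivePotential T φ)
    -- metric entropies: nonnegative, bounded (finite topological entropy), and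
    -- upper semi-continuous on the set of invariant measures
    (h : ProbabilityMeasure X → ℝ) (hh0 : ∀ μ, 0 ≤ h μ)
    (htop : ∃ H : ℝ, ∀ μ : ProbabilityMeasure X,
      Measure.map T (μ : Measure X) = (μ : Measure X) → h μ ≤ H)
    (husc : UpperSemicontinuousOn h
      {μ : ProbabilityMeasure X | Measure.map T (μ : Measure X) = (μ : Measure X)})
    -- Lyapunov exponents of invariant measures
    (χ : ProbabilityMeasure X → EReal)
    (hχ : ∀ μ : ProbabilityMeasure X, Measure.map T (μ : Measure X) = (μ : Measure X) →
      Tendsto (fun n : ℕ => eint (μ : Measure X) (fun x => elog (φ n x)) / (n : EReal))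
        atTop (𝓝 (χ μ)))
    -- β(Φ) > -∞ (and β(Φ) < ∞ always holds), so β(Φ) is a real number
    (β : ℝ)
    (hβ : Tendsto (fun n : ℕ => elog (⨆ x, φ n x) / (n : EReal)) atTop (𝓝 (β : EReal)))
    -- the topological pressure, via the variational principle, and equilibrium states
    (P : ℝ → ℝ)
    (hP : ∀ t ∈ Set.Ioi (0 : ℝ), (P t : EReal) =
      sSup ((fun ν => (h ν : EReal) + (t : EReal) * χ ν) ''
        {ν : ProbabilityMeasure X | Measure.map T (ν : Measure X) = (ν : Measure X)}))
    (μt : ℝ → ProbabilityMeasure X)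
    (hEq : ∀ t ∈ Set.Ioi (0 : ℝ),
      Measure.map T (μt t : Measure X) = (μt t : Measure X) ∧
      (h (μt t) : EReal) + (t : EReal) * χ (μt t) = (P t : EReal))
    -- μ_inf is a weak-* accumulation point of (μ_t) as t → ∞
    (μ_inf : ProbabilityMeasure X) (hacc : MapClusterPt μ_inf atTop μt) :
    Tendsto (fun t => h (μt t)) atTop (𝓝 (h μ_inf)) ∧
    IsGreatest
      {r : ℝ | ∃ ν : ProbabilityMeasure X,
        Measure.map T (ν : Measure X) = (ν : Measure X) ∧ χ ν = (β : EReal) ∧ r = h ν}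
      (h μ_inf) :=
  entropy_of_accumulation_point_eq_max_entropy_of_maximizing_general hT hφ husc hχ hβ
    (fun t ht => ⟨(hEq t ht).1, fun _ hν =>
      ((le_sSup (mem_image_of_mem _ hν)).trans_eq (hP t ht).symm).trans_eq (hEq t ht).2.symm⟩) hacc
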